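/- For every positive integer d and every p ∈ (0,1), ζ*({2}_d) = Li*_{{1}_{2d}}( {1−p, 1/(1−p)}_d ) − Li*_{{1}_{2d}}( {1−p, 1/(1−p)}_{d−1}, 1−p, 1 ), where {1−p, 1/(1−p)}_r denotes the pair of arguments 1−p, 1/(1−p) repeated r times. -/

import Mathlib

/-- One-dimensional polylogarithm `Li_s(x) = ∑_{n≥1} x^n/n^s`. -/
noncomputable def Li (s : ℕ) (x : ℝ) : ℝ := ∑' n : ℕ, x ^ (n + 1) / (n + 1 : ℝ) ^ s

/-- Multiple polylogarithm
`Li*_{s₁,…,s_d}(x₁,…,x_d) = ∑_{n₁ ≥ ⋯ ≥ n_d ≥ 1} ∏ᵢ xᵢ^{nᵢ}/nᵢ^{sᵢ}`. -/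
noncomputable def LiStar (s : List ℕ) (x : List ℝ) : ℝ :=
  ∑' m : {m : Fin s.length → ℕ // (∀ i j : Fin s.length, i ≤ j → m j ≤ m i) ∧ ∀ i, 1 ≤ m i},
    ∏ i : Fin s.length, x.getD (i : ℕ) 0 ^ m.1 i / (m.1 i : ℝ) ^ s.get i

/-!
Write `q = 1 - p`, let `S_{s,x} f n = ∑_{1 ≤ m ≤ n} x^m / m^s * f m`, and let `B` be the binomial
transform of weight `q`. On sequences vanishing at `0` one has `S_{1,1} B = B S_{1,1}` and
`S_{1,1/q} B f n = q^{-n} B (f k / k) n`, hence `S_{1,q} S_{1,1/q} B = B S_{2,1}`. Since `B` maps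
the sequence `0, 1, 1, …` to `1 - q^n`, iterating `d` times shows that the truncations at `n` of
the two polylogarithms on the right differ by `B` applied to the truncations of `ζ*({2}_d)`.

As a Toeplitz averaging, `B` preserves limits. The bound `q^m ≤ q` for `m ≥ 1` makes the second
truncation at most `q` times the first, so `1 - q` times the first is at most the convergent
difference; hence both series converge and one may let `n → ∞`.
-/

open Filter Finset Topology

section TruncatedSums

/-- The tuples `N ≥ m₁ ≥ ⋯ ≥ m_k ≥ 1` indexing the truncations of a multiple polylogarithm of
depth `k`. -/
def antitoneTuples (k N : ℕ) : Finset (Fin k → ℕ) :=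
  {m ∈ Fintype.piFinset fun _ => Icc 1 N | Antitone m}

variable {k N : ℕ}

theorem mem_antitoneTuples {m : Fin k → ℕ} :
    m ∈ antitoneTuples k N ↔ (∀ i, 1 ≤ m i ∧ m i ≤ N) ∧ Antitone m := by
  simp [antitoneTuples]

theorem antitoneTuples_mono (k : ℕ) : Monotone (antitoneTuples k) := fun M N hMN m hm => by
  rw [mem_antitoneTuples] at hm ⊢
  exact ⟨fun i => ⟨(hm.1 i).1, (hm.1 i).2.trans hMN⟩, hm.2⟩

theorem exists_mem_antitoneTuples {m : Fin k → ℕ} (hanti : Antitone m) (hpos : ∀ i, 1 ≤ m i) :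
    ∃ N, m ∈ antitoneTuples k N :=
  ⟨univ.sup m, mem_antitoneTuples.2 ⟨fun i => ⟨hpos i, le_sup (mem_univ i)⟩, hanti⟩⟩

theorem cons_mem_antitoneTuples {n : ℕ} {m : Fin k → ℕ} :
    (Fin.cons n m : Fin (k + 1) → ℕ) ∈ antitoneTuples (k + 1) N ↔
      n ∈ Icc 1 N ∧ m ∈ antitoneTuples k n := by
  simp only [mem_antitoneTuples, Fin.forall_fin_succ, Fin.cons_zero, Fin.cons_succ, mem_Icc]
  constructor
  · rintro ⟨⟨hn, hm⟩, hanti⟩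
    exact ⟨hn, fun i => ⟨(hm i).1, hanti (Fin.zero_le i.succ)⟩,
      fun i j hij => hanti (Fin.succ_le_succ_iff.2 hij)⟩
  · rintro ⟨hn, hm, hanti⟩
    refine ⟨⟨hn, fun i => ⟨(hm i).1, (hm i).2.trans hn.2⟩⟩, fun i j hij => ?_⟩
    cases i using Fin.cases with
    | zero => cases j using Fin.cases with
      | zero => rfl
      | succ j => exact (hm j).2
    | succ i => cases j using Fin.cases with
      | zero => exact absurd hij (Fin.not_le.2 (Fin.succ_pos i))
      | succ j => exact hanti (Fin.succ_le_succ_iff.1 hij)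

theorem sum_antitoneTuples_succ {M : Type*} [AddCommMonoid M] (f : (Fin (k + 1) → ℕ) → M) :
    ∑ m ∈ antitoneTuples (k + 1) N, f m =
      ∑ n ∈ Icc 1 N, ∑ m ∈ antitoneTuples k n, f (Fin.cons n m) := by
  rw [sum_sigma']
  refine sum_nbij' (fun m => ⟨m 0, Fin.tail m⟩) (fun p => Fin.cons p.1 p.2) ?_ ?_ ?_ ?_ ?_
  · intro m hm
    rw [mem_sigma, ← cons_mem_antitoneTuples, Fin.cons_self_tail]
    exact hm
  · exact fun p hp => cons_mem_antitoneTuples.2 (mem_sigma.1 hp)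
  all_goals simp [Fin.cons_self_tail]

/-- The truncation of `LiStar s x` to the summation variables `n_i ≤ N`. -/
noncomputable def LiStarTrunc (s : List ℕ) (x : List ℝ) (N : ℕ) : ℝ :=
  ∑ m ∈ antitoneTuples s.length N,
    ∏ i : Fin s.length, x.getD (i : ℕ) 0 ^ m i / (m i : ℝ) ^ s.get i

theorem LiStarTrunc_nil (x : List ℝ) : LiStarTrunc [] x = 1 := by
  funext N
  have : antitoneTuples 0 N = {![]} := by
    ext m
    simp [mem_antitoneTuples, Subsingleton.antitone, Subsingleton.elim m ![]]
  simp [LiStarTrunc, this]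

theorem LiStarTrunc_cons (a : ℕ) (s : List ℕ) (y : ℝ) (x : List ℝ) (N : ℕ) :
    LiStarTrunc (a :: s) (y :: x) N =
      ∑ n ∈ Icc 1 N, y ^ n / (n : ℝ) ^ a * LiStarTrunc s x n := by
  simp only [LiStarTrunc, List.length_cons, sum_antitoneTuples_succ, mul_sum, Fin.prod_univ_succ]
  rfl

theorem tendsto_sum_tsum_of_bddAbove {ι : Type*} {f : ι → ℝ} (hf : ∀ i, 0 ≤ f i)
    {t : ℕ → Finset ι} (ht : Tendsto t atTop atTop)
    (hbdd : BddAbove (Set.range fun N => ∑ i ∈ t N, f i)) :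
    Tendsto (fun N => ∑ i ∈ t N, f i) atTop (𝓝 (∑' i, f i)) := by
  obtain ⟨C, hC⟩ := hbdd
  have hsummable : Summable f := summable_of_sum_le hf fun u => by
    obtain ⟨N, hN⟩ := (ht.eventually_ge_atTop u).exists
    exact (sum_le_sum_of_subset_of_nonneg hN fun i _ _ => hf i).trans (hC ⟨N, rfl⟩)
  exact hsummable.hasSum.comp ht

theorem tendsto_LiStarTrunc (s : List ℕ) {x : List ℝ} (hx : ∀ y ∈ x, 0 ≤ y)
    (hbdd : BddAbove (Set.range (LiStarTrunc s x))) :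
    Tendsto (LiStarTrunc s x) atTop (𝓝 (LiStar s x)) := by
  classical
  let Admissible (m : Fin s.length → ℕ) : Prop :=
    (∀ i j : Fin s.length, i ≤ j → m j ≤ m i) ∧ ∀ i, 1 ≤ m i
  let summand (m : Fin s.length → ℕ) : ℝ :=
    ∏ i : Fin s.length, x.getD (i : ℕ) 0 ^ m i / (m i : ℝ) ^ s.get i
  let box (N : ℕ) : Finset {m // Admissible m} := (antitoneTuples s.length N).subtype Admissible
  have summand_nonneg (m) : 0 ≤ summand m := prod_nonneg fun i _ => by
    have : 0 ≤ x.getD (i : ℕ) 0 := by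
      rcases lt_or_ge (i : ℕ) x.length with hi | hi
      · rw [List.getD_eq_getElem _ _ hi]; exact hx _ (List.getElem_mem hi)
      · rw [List.getD_eq_default _ _ hi]
    positivity
  have sum_box (N : ℕ) : ∑ m ∈ box N, summand m = LiStarTrunc s x N :=
    sum_subtype_of_mem summand fun m hm =>
      ⟨fun _ _ hij => (mem_antitoneTuples.1 hm).2 hij, fun i => ((mem_antitoneTuples.1 hm).1 i).1⟩
  have box_atTop : Tendsto box atTop atTop := by
    refine tendsto_atTop_finset_of_monotone
      (fun M N hMN => subtype_mono (antitoneTuples_mono _ hMN)) fun m => ?_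
    obtain ⟨N, hN⟩ := exists_mem_antitoneTuples (fun i j hij => m.2.1 i j hij) m.2.2
    exact ⟨N, mem_subtype.2 hN⟩
  have tendsto_sum_box := tendsto_sum_tsum_of_bddAbove
    (f := fun m : {m // Admissible m} => summand m) (fun m => summand_nonneg m) box_atTop
    (by simpa only [sum_box] using hbdd)
  exact tendsto_sum_box.congr sum_box

end TruncatedSums

section PolylogSum

variable {K : Type*} [Field K]

/-- The summation operator `f ↦ (n ↦ ∑_{1 ≤ m ≤ n} x^m / m^s * f m)`. The truncations of a multiple
polylogarithm are obtained by applying such operators successively to the constant sequence `1`. -/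
def polylogSum (s : ℕ) (x : K) : Module.End K (ℕ → K) where
  toFun f n := ∑ m ∈ Icc 1 n, x ^ m / (m : K) ^ s * f m
  map_add' f g := by
    funext n
    simp only [Pi.add_apply, mul_add, sum_add_distrib]
  map_smul' c f := by
    funext n
    simp only [Pi.smul_apply, smul_eq_mul, RingHom.id_apply, mul_sum, mul_left_comm]

theorem polylogSum_apply (s : ℕ) (x : K) (f : ℕ → K) (n : ℕ) :
    polylogSum s x f n = ∑ m ∈ Icc 1 n, x ^ m / (m : K) ^ s * f m := rfl

theorem polylogSum_apply_zero (s : ℕ) (x : K) (f : ℕ → K) : polylogSum s x f 0 = 0 := by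
  simp [polylogSum_apply]

theorem polylogSum_apply_succ (s : ℕ) (x : K) (f : ℕ → K) (n : ℕ) :
    polylogSum s x f (n + 1) =
      polylogSum s x f n + x ^ (n + 1) / ((n + 1 : ℕ) : K) ^ s * f (n + 1) :=
  sum_Icc_succ_top (by lia) _

theorem polylogSum_pow_mul (s : ℕ) (x y : K) (f : ℕ → K) :
    polylogSum s x (fun n => y ^ n * f n) = polylogSum s (x * y) f := by
  funext n
  simp only [polylogSum_apply]
  refine sum_congr rfl fun m _ => ?_
  rw [mul_pow]
  ring

theorem polylogSum_div_pow (s t : ℕ) (x : K) (f : ℕ → K) :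
    polylogSum s x (fun n => f n / (n : K) ^ t) = polylogSum (s + t) x f := by
  funext n
  simp only [polylogSum_apply]
  refine sum_congr rfl fun m _ => ?_
  rw [pow_add, mul_div_assoc', div_mul_eq_mul_div, div_mul_eq_mul_div, div_div]

theorem polylogSum_single_zero (s : ℕ) (x c : K) : polylogSum s x (Pi.single 0 c) = 0 := by
  funext n
  rw [polylogSum_apply]
  refine sum_eq_zero fun m hm => ?_
  rw [Pi.single_eq_of_ne (Nat.one_le_iff_ne_zero.1 (mem_Icc.1 hm).1), mul_zero]

/-- The operator that prepends the pair of arguments `q, 1/q`, both with exponent `1`, to a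
truncated multiple polylogarithm. -/
def polylogPairSum (q : K) : Module.End K (ℕ → K) :=
  polylogSum 1 q * polylogSum 1 q⁻¹

theorem polylogPairSum_apply (q : K) (f : ℕ → K) :
    polylogPairSum q f = polylogSum 1 q (polylogSum 1 q⁻¹ f) := rfl

theorem LiStarTrunc_eq_prod_polylogSum {s : List ℕ} {x : List ℝ} (h : s.length = x.length) :
    LiStarTrunc s x = (List.zipWith polylogSum s x).prod 1 := by
  induction s generalizing x with
  | nil => simp [LiStarTrunc_nil]
  | cons a s ih =>
    obtain _ | ⟨y, x⟩ := x
    · simp at h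
    · funext N
      rw [LiStarTrunc_cons, ih (Nat.succ_injective h), List.zipWith_cons_cons, List.prod_cons]
      rfl

theorem LiStarTrunc_replicate (s : ℕ) {d : ℕ} {x : List ℝ} (h : d = x.length) :
    LiStarTrunc (List.replicate d s) x = (x.map (polylogSum s)).prod 1 := by
  subst h
  rw [LiStarTrunc_eq_prod_polylogSum List.length_replicate, ← List.map_const',
    List.zipWith_map_left, List.zipWith_self]

theorem LiStarTrunc_replicate_replicate (s d : ℕ) (x : ℝ) :
    LiStarTrunc (List.replicate d s) (List.replicate d x) = (polylogSum s x ^ d) 1 := by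
  rw [LiStarTrunc_replicate s List.length_replicate.symm, List.map_replicate, List.prod_replicate]

theorem LiStarTrunc_replicate_one_pair (d : ℕ) (q : ℝ) :
    LiStarTrunc (List.replicate (2 * d) 1) (List.replicate d [q, q⁻¹]).flatten =
      (polylogPairSum q ^ d) 1 := by
  rw [LiStarTrunc_replicate 1 (by simp [mul_comm])]
  simp [List.map_flatten, List.prod_flatten, polylogPairSum]

theorem LiStarTrunc_replicate_one_pair_append {q : ℝ} (hq : q ≠ 0) (r : ℕ) :
    LiStarTrunc (List.replicate (2 * (r + 1)) 1)
        ((List.replicate r [q, q⁻¹]).flatten ++ [q, 1]) =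
      (polylogPairSum q ^ (r + 1)) fun n => q ^ n := by
  have innermost : polylogSum 1 q⁻¹ (fun n => q ^ n) = polylogSum 1 1 1 := by
    simpa [hq] using polylogSum_pow_mul 1 q⁻¹ q 1
  rw [LiStarTrunc_replicate 1 (by simp [mul_comm 2, add_one_mul]), pow_succ, Module.End.mul_apply,
    polylogPairSum_apply, innermost]
  simp [List.map_flatten, List.prod_flatten, polylogPairSum]

end PolylogSum

section BinomialTransform

/-- The binomial transform of weight `q`, whose value at `n` is, for `q ∈ [0, 1]`, the expectation
of `f` under the binomial distribution with `n` trials and success probability `1 - q`. -/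
def binomialTransform {R : Type*} [CommRing R] (q : R) : (ℕ → R) →ₗ[R] (ℕ → R) where
  toFun f n := ∑ ij ∈ antidiagonal n, (n.choose ij.1 : R) * ((1 - q) ^ ij.1 * q ^ ij.2 * f ij.1)
  map_add' f g := by
    funext n
    simp only [Pi.add_apply, mul_add, sum_add_distrib]
  map_smul' c f := by
    funext n
    simp only [Pi.smul_apply, smul_eq_mul, RingHom.id_apply, mul_sum, mul_left_comm]

section CommRing

variable {R : Type*} [CommRing R] (q : R)

theorem binomialTransform_apply (f : ℕ → R) (n : ℕ) :
    binomialTransform q f n =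
      ∑ ij ∈ antidiagonal n, (n.choose ij.1 : R) * ((1 - q) ^ ij.1 * q ^ ij.2 * f ij.1) := rfl

theorem binomialTransform_apply_eq_sum_range (f : ℕ → R) (n : ℕ) :
    binomialTransform q f n =
      ∑ k ∈ range (n + 1), (n.choose k : R) * (1 - q) ^ k * q ^ (n - k) * f k := by
  rw [binomialTransform_apply, Nat.sum_antidiagonal_eq_sum_range_succ_mk]
  simp only [mul_assoc]

theorem binomialTransform_apply_zero (f : ℕ → R) : binomialTransform q f 0 = f 0 := by
  simp [binomialTransform_apply]

theorem binomialTransform_apply_succ (f : ℕ → R) (n : ℕ) :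
    binomialTransform q f (n + 1) =
      q * binomialTransform q f n + (1 - q) * binomialTransform q (fun k => f (k + 1)) n := by
  simp only [binomialTransform_apply, mul_sum]
  rw [sum_antidiagonal_choose_succ_mul fun i j => (1 - q) ^ i * q ^ j * f i]
  congr 1 <;> refine sum_congr rfl fun ij hij => ?_
  · ring
  · rw [← Nat.choose_symm_of_eq_add (mem_antidiagonal.1 hij).symm]
    ring

theorem binomialTransform_one : binomialTransform q 1 = 1 := by
  funext n
  induction n with
  | zero => exact binomialTransform_apply_zero q 1
  | succ n ih =>
    rw [binomialTransform_apply_succ, ih]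
    change q * 1 + (1 - q) * binomialTransform q 1 n = 1
    rw [ih, Pi.one_apply]
    ring

theorem binomialTransform_single_zero :
    binomialTransform q (Pi.single 0 1) = fun n => q ^ n := by
  funext n
  rw [binomialTransform_apply_eq_sum_range, sum_eq_single_of_mem 0 (by simp)]
  · simp
  · intro k _ hk
    rw [Pi.single_eq_of_ne hk, mul_zero]

end CommRing

section Field

variable {K : Type*} [Field K] [CharZero K] {q : K} {f : ℕ → K}

theorem binomialTransform_apply_succ_div (hf : f 0 = 0) (n : ℕ) :
    binomialTransform q f (n + 1) / ((n + 1 : ℕ) : K) =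
      (1 - q) * binomialTransform q (fun k => f (k + 1) / ((k + 1 : ℕ) : K)) n := by
  simp only [binomialTransform_apply, Nat.sum_antidiagonal_succ, hf, mul_zero, zero_add, sum_div,
    mul_sum]
  refine sum_congr rfl fun ij _ => ?_
  have absorption : ((n + 1 : ℕ) : K) * n.choose ij.1 =
      (n + 1).choose (ij.1 + 1) * ((ij.1 + 1 : ℕ) : K) := by
    exact_mod_cast Nat.add_one_mul_choose_eq n ij.1
  have hn : ((n + 1 : ℕ) : K) ≠ 0 := Nat.cast_ne_zero.2 n.succ_ne_zero
  have hi : ((ij.1 + 1 : ℕ) : K) ≠ 0 := Nat.cast_ne_zero.2 ij.1.succ_ne_zero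
  field_simp
  linear_combination -(1 - q) ^ (ij.1 + 1) * q ^ ij.2 * f (ij.1 + 1) * absorption

theorem polylogSum_one_one_binomialTransform (hf : f 0 = 0) :
    polylogSum 1 1 (binomialTransform q f) = binomialTransform q (polylogSum 1 1 f) := by
  funext n
  induction n with
  | zero => rw [binomialTransform_apply_zero, polylogSum_apply_zero, polylogSum_apply_zero]
  | succ n ih =>
    have hshift : (fun k => polylogSum 1 1 f (k + 1)) =
        polylogSum 1 1 f + fun k => f (k + 1) / ((k + 1 : ℕ) : K) := by
      funext k
      rw [polylogSum_apply_succ, one_pow, pow_one, one_div_mul_eq_div, Pi.add_apply]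
    rw [polylogSum_apply_succ, ih, one_pow, pow_one, one_div_mul_eq_div,
      binomialTransform_apply_succ_div hf, binomialTransform_apply_succ, hshift, map_add,
      Pi.add_apply]
    ring

theorem polylogSum_one_inv_binomialTransform (hq : q ≠ 0) (hf : f 0 = 0) :
    polylogSum 1 q⁻¹ (binomialTransform q f) =
      fun n => q⁻¹ ^ n * binomialTransform q (fun k => f k / (k : K)) n := by
  funext n
  induction n with
  | zero => rw [binomialTransform_apply_zero, polylogSum_apply_zero, hf, zero_div, mul_zero]
  | succ n ih =>
    rw [polylogSum_apply_succ, ih, pow_one, div_mul_eq_mul_div, mul_div_assoc,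
      binomialTransform_apply_succ_div hf, binomialTransform_apply_succ, pow_succ]
    field_simp

theorem polylogPairSum_binomialTransform (hq : q ≠ 0) (hf : f 0 = 0) :
    polylogPairSum q (binomialTransform q f) = binomialTransform q (polylogSum 2 1 f) := by
  rw [polylogPairSum_apply, polylogSum_one_inv_binomialTransform hq hf, polylogSum_pow_mul,
    mul_inv_cancel₀ hq, polylogSum_one_one_binomialTransform (by rw [hf, zero_div])]
  congr 1
  simpa only [pow_one] using polylogSum_div_pow 1 1 1 f

theorem polylogPairSum_pow_binomialTransform (hq : q ≠ 0) (hf : f 0 = 0) (d : ℕ) :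
    (polylogPairSum q ^ d) (binomialTransform q f) =
      binomialTransform q ((polylogSum 2 1 ^ d) f) := by
  induction d generalizing f with
  | zero => rfl
  | succ d ih =>
    rw [pow_succ, pow_succ, Module.End.mul_apply, Module.End.mul_apply,
      polylogPairSum_binomialTransform hq hf, ih (polylogSum_apply_zero 2 1 f)]

theorem polylogPairSum_pow_one_sub_geometric (hq : q ≠ 0) (r : ℕ) :
    (polylogPairSum q ^ (r + 1)) 1 - (polylogPairSum q ^ (r + 1)) (fun n => q ^ n) =
      binomialTransform q ((polylogSum 2 1 ^ (r + 1)) 1) := by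
  have hB : binomialTransform q (1 - Pi.single 0 1) = 1 - fun n => q ^ n := by
    rw [map_sub, binomialTransform_one, binomialTransform_single_zero]
  have hS : (polylogSum 2 1 ^ (r + 1)) (1 - Pi.single 0 1 : ℕ → K) =
      (polylogSum 2 1 ^ (r + 1)) 1 := by
    rw [pow_succ, Module.End.mul_apply, Module.End.mul_apply, map_sub, polylogSum_single_zero,
      sub_zero]
  rw [← map_sub, ← hB, polylogPairSum_pow_binomialTransform hq (by simp), hS]

end Field

end BinomialTransform

section Limits

theorem tendsto_sum_mul_of_tendsto {a : ℕ → ℕ → ℝ} (ha : ∀ n k, 0 ≤ a n k)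
    (hsum : ∀ n, ∑ k ∈ range (n + 1), a n k = 1) (hcol : ∀ k, Tendsto (a · k) atTop (𝓝 0))
    {u : ℕ → ℝ} {L : ℝ} (hu : Tendsto u atTop (𝓝 L)) :
    Tendsto (fun n => ∑ k ∈ range (n + 1), a n k * u k) atTop (𝓝 L) := by
  rw [Metric.tendsto_atTop] at hu ⊢
  intro ε hε
  obtain ⟨K, hK⟩ := hu (ε / 2) (half_pos hε)
  have head_small : ∀ᶠ n in atTop, ∑ k ∈ range K, a n k * |u k - L| < ε / 2 := by
    have : Tendsto (fun n => ∑ k ∈ range K, a n k * |u k - L|) atTop (𝓝 0) := by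
      simpa using tendsto_finsetSum (range K) fun k _ => (hcol k).mul_const |u k - L|
    exact this.eventually_lt_const (half_pos hε)
  obtain ⟨N, hN⟩ := eventually_atTop.1 (head_small.and (eventually_ge_atTop K))
  refine ⟨N, fun n hn => ?_⟩
  obtain ⟨hhead, hKn⟩ := hN n hn
  have tail_small : ∑ k ∈ Ico K (n + 1), a n k * |u k - L| ≤ ε / 2 :=
    calc ∑ k ∈ Ico K (n + 1), a n k * |u k - L|
        ≤ ∑ k ∈ Ico K (n + 1), a n k * (ε / 2) := sum_le_sum fun k hk =>
          mul_le_mul_of_nonneg_left (hK k (mem_Ico.1 hk).1).le (ha n k)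
      _ ≤ ∑ k ∈ range (n + 1), a n k * (ε / 2) :=
          sum_le_sum_of_subset_of_nonneg (fun k hk => mem_range.2 (mem_Ico.1 hk).2)
            fun k _ _ => mul_nonneg (ha n k) (half_pos hε).le
      _ = ε / 2 := by rw [← sum_mul, hsum, one_mul]
  calc dist (∑ k ∈ range (n + 1), a n k * u k) L
      = |∑ k ∈ range (n + 1), a n k * (u k - L)| := by
        simp only [Real.dist_eq, mul_sub, sum_sub_distrib, ← sum_mul, hsum, one_mul]
    _ ≤ ∑ k ∈ range (n + 1), a n k * |u k - L| :=
        (abs_sum_le_sum_abs _ _).trans_eq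
          (sum_congr rfl fun k _ => by rw [abs_mul, abs_of_nonneg (ha n k)])
    _ = ∑ k ∈ range K, a n k * |u k - L| + ∑ k ∈ Ico K (n + 1), a n k * |u k - L| :=
        (sum_range_add_sum_Ico _ (by lia)).symm
    _ < ε := by linarith

variable {q : ℝ}

theorem tendsto_binomialTransform (hq0 : 0 ≤ q) (hq1 : q < 1) {u : ℕ → ℝ} {L : ℝ}
    (hu : Tendsto u atTop (𝓝 L)) : Tendsto (binomialTransform q u) atTop (𝓝 L) := by
  simp only [funext (binomialTransform_apply_eq_sum_range q u)]
  refine tendsto_sum_mul_of_tendsto (fun n k => ?_) (fun n => ?_) (fun k => ?_) hu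
  · have : 0 ≤ 1 - q := sub_nonneg.2 hq1.le
    positivity
  · simpa [binomialTransform_apply_eq_sum_range] using congrFun (binomialTransform_one q) n
  · rw [← tendsto_add_atTop_iff_nat k]
    have hq : ‖q‖ < 1 := by rwa [Real.norm_of_nonneg hq0]
    have column := (summable_choose_mul_geometric_of_norm_lt_one k
      hq).tendsto_atTop_zero.mul_const ((1 - q) ^ k)
    rw [zero_mul] at column
    refine column.congr fun n => ?_
    rw [Nat.add_sub_cancel]
    ring

variable {s : ℕ} {x : ℝ} {f g : ℕ → ℝ}

theorem polylogSum_le_polylogSum (hx : 0 ≤ x) (hfg : ∀ n, 1 ≤ n → f n ≤ g n) :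
    polylogSum s x f ≤ polylogSum s x g := fun _ =>
  sum_le_sum fun m hm => mul_le_mul_of_nonneg_left (hfg m (mem_Icc.1 hm).1) (by positivity)

theorem polylogSum_monotone (s : ℕ) (hx : 0 ≤ x) : Monotone (polylogSum s x) := fun _ _ hfg =>
  polylogSum_le_polylogSum hx fun n _ => hfg n

theorem bddAbove_range_polylogSum (hx : 0 ≤ x) (hsum : Summable fun n : ℕ => x ^ n / (n : ℝ) ^ s)
    (hf : BddAbove (Set.range f)) : BddAbove (Set.range (polylogSum s x f)) := by
  obtain ⟨C, hC⟩ := hf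
  refine ⟨(∑' n : ℕ, x ^ n / (n : ℝ) ^ s) * |C|, Set.forall_mem_range.2 fun n => ?_⟩
  calc polylogSum s x f n ≤ polylogSum s x (fun _ => |C|) n :=
        polylogSum_monotone s hx (fun m => (hC ⟨m, rfl⟩).trans (le_abs_self C)) n
    _ = (∑ m ∈ Icc 1 n, x ^ m / (m : ℝ) ^ s) * |C| := by
        rw [polylogSum_apply, sum_mul]
    _ ≤ (∑' m : ℕ, x ^ m / (m : ℝ) ^ s) * |C| := by
        gcongr
        exact hsum.sum_le_tsum _ fun m _ => by positivity

theorem bddAbove_range_polylogSum_pow_one (hs : 1 < s) (d : ℕ) :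
    BddAbove (Set.range ((polylogSum s (1 : ℝ) ^ d) 1)) := by
  induction d with
  | zero => exact ⟨1, by simp [upperBounds]⟩
  | succ d ih =>
    rw [pow_succ', Module.End.mul_apply]
    exact bddAbove_range_polylogSum zero_le_one (by simpa using hs) ih

theorem polylogPairSum_monotone (hq : 0 ≤ q) : Monotone (polylogPairSum q) :=
  (polylogSum_monotone 1 hq).comp (polylogSum_monotone 1 (inv_nonneg.2 hq))

theorem polylogPairSum_pow_geometric_le_smul (hq0 : 0 ≤ q) (hq1 : q ≤ 1) (r : ℕ) :
    (polylogPairSum q ^ (r + 1)) (fun n => q ^ n) ≤ q • (polylogPairSum q ^ (r + 1)) 1 := by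
  have first_step : polylogPairSum q (fun n => q ^ n) ≤ polylogPairSum q (q • 1) := by
    refine polylogSum_monotone 1 hq0 (polylogSum_le_polylogSum (inv_nonneg.2 hq0) fun n hn => ?_)
    simpa using pow_le_of_le_one hq0 hq1 (Nat.one_le_iff_ne_zero.1 hn)
  rw [← map_smul, pow_succ, Module.End.mul_apply, Module.End.mul_apply, Module.End.coe_pow]
  exact (polylogPairSum_monotone hq0).iterate r first_step

theorem tendsto_polylogSum_pow_one (hs : 1 < s) (d : ℕ) :
    Tendsto ((polylogSum s (1 : ℝ) ^ d) 1) atTop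
      (𝓝 (LiStar (List.replicate d s) (List.replicate d 1))) := by
  have hbdd := bddAbove_range_polylogSum_pow_one hs d
  rw [← LiStarTrunc_replicate_replicate] at hbdd ⊢
  exact tendsto_LiStarTrunc _ (fun y hy => (List.eq_of_mem_replicate hy).symm ▸ zero_le_one) hbdd

theorem bddAbove_range_polylogPairSum_pow_one (hq0 : 0 < q) (hq1 : q < 1) (r : ℕ) :
    BddAbove (Set.range ((polylogPairSum q ^ (r + 1)) 1)) := by
  obtain ⟨C, hC⟩ := (tendsto_binomialTransform hq0.le hq1
    (tendsto_polylogSum_pow_one one_lt_two (r + 1))).bddAbove_range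
  refine ⟨C / (1 - q), Set.forall_mem_range.2 fun n => ?_⟩
  have hdiff := congrFun (polylogPairSum_pow_one_sub_geometric hq0.ne' r) n
  have hgeom := polylogPairSum_pow_geometric_le_smul hq0.le hq1.le r n
  have htransform := hC ⟨n, rfl⟩
  rw [Pi.sub_apply] at hdiff
  rw [Pi.smul_apply, smul_eq_mul] at hgeom
  rw [le_div_iff₀ (sub_pos.2 hq1)]
  linarith

theorem bddAbove_range_polylogPairSum_pow_geometric (hq0 : 0 < q) (hq1 : q < 1) (r : ℕ) :
    BddAbove (Set.range ((polylogPairSum q ^ (r + 1)) fun n => q ^ n)) := by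
  obtain ⟨C, hC⟩ := bddAbove_range_polylogPairSum_pow_one hq0 hq1 r
  exact ⟨q * C, Set.forall_mem_range.2 fun n =>
    (polylogPairSum_pow_geometric_le_smul hq0.le hq1.le r n).trans
      (mul_le_mul_of_nonneg_left (hC ⟨n, rfl⟩) hq0.le)⟩

theorem tendsto_polylogPairSum_pow_one (hq0 : 0 < q) (hq1 : q < 1) (r : ℕ) :
    Tendsto ((polylogPairSum q ^ (r + 1)) 1) atTop
      (𝓝 (LiStar (List.replicate (2 * (r + 1)) 1) (List.replicate (r + 1) [q, q⁻¹]).flatten)) := by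
  have hbdd := bddAbove_range_polylogPairSum_pow_one hq0 hq1 r
  rw [← LiStarTrunc_replicate_one_pair] at hbdd ⊢
  refine tendsto_LiStarTrunc _ (fun y hy => ?_) hbdd
  obtain rfl | rfl : y = q ∨ y = q⁻¹ := by simpa using hy
  all_goals positivity

theorem tendsto_polylogPairSum_pow_geometric (hq0 : 0 < q) (hq1 : q < 1) (r : ℕ) :
    Tendsto ((polylogPairSum q ^ (r + 1)) fun n => q ^ n) atTop
      (𝓝 (LiStar (List.replicate (2 * (r + 1)) 1)
        ((List.replicate r [q, q⁻¹]).flatten ++ [q, 1]))) := by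
  have hbdd := bddAbove_range_polylogPairSum_pow_geometric hq0 hq1 r
  rw [← LiStarTrunc_replicate_one_pair_append hq0.ne'] at hbdd ⊢
  refine tendsto_LiStarTrunc _ (fun y hy => ?_) hbdd
  have hy : (r ≠ 0 ∧ (y = q ∨ y = q⁻¹)) ∨ y = q ∨ y = 1 := by simpa using hy
  obtain ⟨-, rfl | rfl⟩ | rfl | rfl := hy
  all_goals positivity

end Limits

/-- `ζ*({2}_d)` as a difference of `2d`-dimensional multiple polylogarithms. -/
theorem stmt_14 (d : ℕ) (hd : 0 < d) (p : ℝ) (hp : p ∈ Set.Ioo (0 : ℝ) 1) :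
    LiStar (List.replicate d 2) (List.replicate d (1 : ℝ)) =
      LiStar (List.replicate (2 * d) 1)
          (List.replicate d [1 - p, 1 / (1 - p)]).flatten -
        LiStar (List.replicate (2 * d) 1)
          ((List.replicate (d - 1) [1 - p, 1 / (1 - p)]).flatten ++ [1 - p, 1]) := by
  obtain ⟨r, rfl⟩ := Nat.exists_eq_add_one.2 hd
  obtain ⟨q, rfl⟩ : ∃ q, p = 1 - q := ⟨1 - p, (sub_sub_cancel 1 p).symm⟩
  have hq0 : 0 < q := by linarith [hp.2]
  have hq1 : q < 1 := by linarith [hp.1]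
  rw [sub_sub_cancel, one_div, Nat.add_sub_cancel]
  have hzeta := tendsto_binomialTransform hq0.le hq1
    (tendsto_polylogSum_pow_one one_lt_two (r + 1))
  rw [← polylogPairSum_pow_one_sub_geometric hq0.ne' r] at hzeta
  exact tendsto_nhds_unique hzeta
    ((tendsto_polylogPairSum_pow_one hq0 hq1 r).sub
      (tendsto_polylogPairSum_pow_geometric hq0 hq1 r))
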